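/- Let n be an even positive integer, F a finite field with characteristic coprime to n, g(X) of degree < n and g'(X) of degree < n/2 over F. Let C_{g,g'} = { (f·g mod X^n − 1, f·g' mod X^{n/2} − 1) : f ∈ F[X] } ⊆ F^n × F^{n/2}, viewed as an F-linear subspace of F^{3n/2}. Then dim_F C_{g,g'} = n − deg[gcd(g(X), X^{n/2} + 1) · gcd(g(X), g'(X), X^{n/2} − 1)]. -/

import Mathlib

open Polynomial Matrix

/-- The monic polynomial associated to `p` (and `0` for `p = 0`). -/
noncomputable def monicize {F : Type*} [Field F] (p : Polynomial F) : Polynomial F :=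
  Polynomial.C p.leadingCoeff⁻¹ * p

/-- The monic greatest common divisor of two polynomials over a field. -/
noncomputable def pgcd {F : Type*} [Field F] (p q : Polynomial F) : Polynomial F :=
  letI := Classical.decEq F
  monicize (EuclideanDomain.gcd p q)

/-- The monic least common multiple of two polynomials over a field. -/
noncomputable def plcm {F : Type*} [Field F] (p q : Polynomial F) : Polynomial F :=
  letI := Classical.decEq F
  monicize (EuclideanDomain.lcm p q)

/-- Generalized circulant matrix: `(i,k)`-entry is `g_{(k-i) mod n}`. -/
def circMat (F : Type*) [Field F] (m n : ℕ) (g : Polynomial F) :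
    Matrix (Fin m) (Fin n) F :=
  Matrix.of fun i k => g.coeff ((k.1 + (n - 1) * i.1) % n)

theorem pgcd_spec {F : Type*} [Field F] (p q : Polynomial F) :
    pgcd p q ∣ p ∧ pgcd p q ∣ q ∧ ∃ u v, pgcd p q = u * p + v * q := by
  classical
  have key : ∀ e : Polynomial F, EuclideanDomain.gcd p q ∣ e → pgcd p q ∣ e := by
    intro e he
    unfold pgcd monicize
    by_cases h0 : EuclideanDomain.gcd p q = 0
    · have : e = 0 := by simpa [h0] using he
      simp [this]
    · have hu : IsUnit (C (EuclideanDomain.gcd p q).leadingCoeff⁻¹) := by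
        rw [Polynomial.isUnit_C]
        simpa using h0
      have : C (EuclideanDomain.gcd p q).leadingCoeff⁻¹ * EuclideanDomain.gcd p q ∣ e :=
        (hu.mul_left_dvd).2 he
      convert this
  refine ⟨key _ (EuclideanDomain.gcd_dvd_left _ _), key _ (EuclideanDomain.gcd_dvd_right _ _), ?_⟩
  have h := EuclideanDomain.gcd_eq_gcd_ab p q
  refine ⟨C (EuclideanDomain.gcd p q).leadingCoeff⁻¹ * EuclideanDomain.gcdA p q,
    C (EuclideanDomain.gcd p q).leadingCoeff⁻¹ * EuclideanDomain.gcdB p q, ?_⟩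
  have h2 : pgcd p q = C (EuclideanDomain.gcd p q).leadingCoeff⁻¹ * EuclideanDomain.gcd p q := by
    unfold pgcd monicize
    congr!
  rw [h2]
  linear_combination (C (EuclideanDomain.gcd p q).leadingCoeff⁻¹) * h

theorem coeff_mod_zero_iff {F : Type*} [Field F] (k : ℕ) (hk : 0 < k) (p : Polynomial F) :
    (fun i : Fin k => (p %ₘ (X ^ k - 1)).coeff i) = 0 ↔ (X ^ k - 1 : Polynomial F) ∣ p := by
  have hM : (X ^ k - 1 : Polynomial F).Monic := by
    simpa using monic_X_pow_sub_C (1 : F) hk.ne'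
  have hd : (X ^ k - 1 : Polynomial F).degree = k := by
    simpa using degree_X_pow_sub_C hk (1 : F)
  rw [← Polynomial.modByMonic_eq_zero_iff_dvd hM]
  constructor
  · intro h
    ext i
    by_cases hi : i < k
    · simpa using congrFun h ⟨i, hi⟩
    · have := degree_modByMonic_lt p hM
      rw [hd] at this
      rw [coeff_zero]
      exact coeff_eq_zero_of_degree_lt (this.trans_le (by exact_mod_cast not_lt.1 hi))
  · intro h
    funext i
    simp [h]

/-- reduction modulo `X^k-1`, as a linear map to coefficient vectors -/
noncomputable def redMap (F : Type*) [Field F] (k : ℕ) (g : Polynomial F) :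
    Polynomial F →ₗ[F] (Fin k → F) where
  toFun f := fun i => ((f * g) %ₘ (X ^ k - 1)).coeff i
  map_add' a b := by
    funext i
    simp [add_mul, add_modByMonic]
  map_smul' c a := by
    funext i
    simp [smul_modByMonic]

theorem stmt_17 (F : Type*) [Field F] [Fintype F]
    (n : ℕ) (hn : 0 < n) (hev : Even n)
    (hchar : Nat.Coprime (ringChar F) n)
    (g g' : Polynomial F) (hg : g.degree < n) (hg' : g'.degree < (n / 2 : ℕ)) :
    Module.finrank F
      (Submodule.span F
        (Set.range (fun f : Polynomial F =>
          ((fun k : Fin n => ((f * g) %ₘ (X ^ n - 1)).coeff k,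
            fun k : Fin (n / 2) => ((f * g') %ₘ (X ^ (n / 2) - 1)).coeff k) :
            (Fin n → F) × (Fin (n / 2) → F)))))
      = n - (pgcd g (X ^ (n / 2) + 1) * pgcd g (pgcd g' (X ^ (n / 2) - 1))).natDegree := by
  obtain ⟨m, rfl⟩ := hev
  have hm : 0 < m := by omega
  have hmm : (m + m) / 2 = m := by omega
  rw [hmm] at *
  set P : Polynomial F := X ^ m - 1 with hP
  set Q : Polynomial F := X ^ m + 1 with hQ
  have hPQ : (X ^ (m + m) - 1 : Polynomial F) = P * Q := by rw [hP, hQ]; ring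
  have h2 : (2 : F) ≠ 0 := by
    intro h
    have h3 : ringChar F ∣ 2 := (ringChar.spec F 2).1 (by exact_mod_cast h)
    have h4 : ringChar F ∣ 1 := by
      rw [← hchar]
      exact Nat.dvd_gcd dvd_rfl (h3.trans ⟨m, by ring⟩)
    exact CharP.ringChar_ne_one (Nat.dvd_one.1 h4)
  have hcop : IsCoprime P Q := by
    refine ⟨-C (2⁻¹), C (2⁻¹), ?_⟩
    have : (C (2⁻¹ : F) * C 2 : Polynomial F) = 1 := by rw [← C_mul, inv_mul_cancel₀ h2, C_1]
    have h22 : (C 2 : Polynomial F) = 2 := rfl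
    rw [h22] at this
    rw [hP, hQ]
    linear_combination this
  obtain ⟨a1, a2, u, v, huv⟩ := pgcd_spec g Q
  obtain ⟨b1, b2, s, t, hst⟩ := pgcd_spec g' P
  obtain ⟨c1, c2, w, z, hwz⟩ := pgcd_spec g (pgcd g' P)
  generalize pgcd g Q = d1 at *
  generalize pgcd g (pgcd g' P) = d2 at *
  have c3 := c2.trans b1
  have c4 := c2.trans b2
  obtain ⟨q1, hq1⟩ := a2
  obtain ⟨q2, hq2⟩ := c4
  have hM : (X ^ (m + m) - 1 : Polynomial F).natDegree = m + m := by
    simpa using natDegree_X_pow_sub_C (n := m + m) (r := (1 : F))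
  have hne : (X ^ (m + m) - 1 : Polynomial F) ≠ 0 := by
    intro h
    rw [h] at hM
    simp at hM
    omega
  have hfac : (X ^ (m + m) - 1 : Polynomial F) = (q1 * q2) * (d1 * d2) := by
    rw [hPQ, hq1, hq2]; ring
  have hD0 : d1 * d2 ≠ 0 := by
    intro h; apply hne; rw [hfac, h, mul_zero]
  have hH0 : q1 * q2 ≠ 0 := by
    intro h; apply hne; rw [hfac, h, zero_mul]
  have hker : ∀ f : Polynomial F, (P * Q ∣ f * g ∧ P ∣ f * g') ↔ q1 * q2 ∣ f := by
    intro f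
    have e1 : q1 * q2 ∣ f ↔ P * Q ∣ f * (d1 * d2) := by
      rw [← hPQ, hfac, mul_dvd_mul_iff_right hD0]
    rw [e1]
    constructor
    · rintro ⟨h1, h3⟩
      have hp := (dvd_mul_right P Q).trans h1
      have hq := (dvd_mul_left Q P).trans h1
      refine hcop.mul_dvd ?_ ?_
      · have : f * (d1 * d2) = d1 * w * (f * g) + d1 * z * s * (f * g') + P * (f * d1 * z * t) := by
          rw [hwz, hst]; ring
        rw [this]
        exact dvd_add (dvd_add (hp.mul_left _) (h3.mul_left _)) (dvd_mul_right _ _)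
      · have : f * (d1 * d2) = d2 * u * (f * g) + Q * (f * d2 * v) := by
          rw [huv]; ring
        rw [this]
        exact dvd_add (hq.mul_left _) (dvd_mul_right _ _)
    · intro h
      have hp := (dvd_mul_right P Q).trans h
      have hq := (dvd_mul_left Q P).trans h
      have cop1 : IsCoprime P d1 := hcop.of_isCoprime_of_dvd_right ⟨q1, hq1⟩
      have cop2 : IsCoprime Q d2 := hcop.symm.of_isCoprime_of_dvd_right ⟨q2, hq2⟩
      have hp' : P ∣ f * d2 := by
        apply cop1.dvd_of_dvd_mul_left
        convert hp using 1; ring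
      have hq' : Q ∣ f * d1 := by
        apply cop2.dvd_of_dvd_mul_left
        convert hq using 1; ring
      exact ⟨hcop.mul_dvd (hp'.trans (mul_dvd_mul_left f c1)) (hq'.trans (mul_dvd_mul_left f a1)),
        hp'.trans (mul_dvd_mul_left f c3)⟩
  let φ : Polynomial F →ₗ[F] (Fin (m + m) → F) × (Fin m → F) :=
    (redMap F (m + m) g).prod (redMap F m g')
  have hspan : Submodule.span F
        (Set.range (fun f : Polynomial F =>
          ((fun k : Fin (m + m) => ((f * g) %ₘ (X ^ (m + m) - 1)).coeff k,
            fun k : Fin m => ((f * g') %ₘ P).coeff k) :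
            (Fin (m + m) → F) × (Fin m → F)))) = LinearMap.range φ := by
    have : Set.range (fun f : Polynomial F =>
          ((fun k : Fin (m + m) => ((f * g) %ₘ (X ^ (m + m) - 1)).coeff k,
            fun k : Fin m => ((f * g') %ₘ P).coeff k) :
            (Fin (m + m) → F) × (Fin m → F))) = (LinearMap.range φ : Set _) := rfl
    rw [this, Submodule.span_eq]
  have hk : LinearMap.ker φ = (Ideal.span {q1 * q2}).restrictScalars F := by
    ext f
    rw [Submodule.restrictScalars_mem, Ideal.mem_span_singleton, ← hker f, ← hPQ,
      ← coeff_mod_zero_iff (m + m) hn, hP, ← coeff_mod_zero_iff m hm, LinearMap.mem_ker]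
    exact Prod.mk_eq_zero
  have hfin : Module.finrank F (LinearMap.range φ) = (q1 * q2).natDegree := by
    rw [← φ.quotKerEquivRange.finrank_eq, hk]
    exact finrank_quotient_span_eq_natDegree
  have hdeg := congrArg natDegree hfac
  rw [hM, natDegree_mul hH0 hD0] at hdeg
  refine (congrArg (fun S : Submodule F ((Fin (m + m) → F) × (Fin m → F)) => Module.finrank F S) hspan).trans ?_
  simp only [hfin]
  omega
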